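/- Let h : (0, π²) → (0, (4π)^{3/2}) be a differentiable function satisfying h'(s) = −(36π − 9 h(s)^{2/3})^{1/2} for all s ∈ (0, π²) and lim_{s→0⁺} h(s) = (4π)^{3/2}. Then there exist constants C > 0 and s₁ ∈ (0, π²) such that for all s ∈ (0, s₁), | h(π² − s) − 6√π · s · ( 1 − (3/10)(3s/(4π))^{2/3} − (3/280)(3s/(4π))^{4/3} ) | ≤ C s³. -/

import Mathlib

open Real Set Filter

noncomputable def GG (u : ℝ) : ℝ := Real.arcsin u - u * Real.sqrt (1 - u ^ 2)

lemma GG_cont : Continuous GG := by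
  unfold GG
  exact Real.continuous_arcsin.sub (by fun_prop)

lemma GG_zero : GG 0 = 0 := by simp [GG]

lemma GG_one : GG 1 = π / 2 := by simp [GG]

lemma GG_deriv {u : ℝ} (h0 : -1 < u) (h1 : u < 1) :
    HasDerivAt GG (2 * u ^ 2 / Real.sqrt (1 - u ^ 2)) u := by
  have hp : 0 < 1 - u ^ 2 := by nlinarith
  have hs := Real.sqrt_pos.mpr hp
  have hq := Real.sq_sqrt hp.le
  have d1 := Real.hasDerivAt_arcsin (x := u) (by linarith) (by linarith)
  have d2 : HasDerivAt (fun x : ℝ => 1 - x ^ 2) (-(2 * u)) u := by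
    have := ((hasDerivAt_id u).pow 2).const_sub 1
    simpa using this
  have d3 := (hasDerivAt_id u).mul (d2.sqrt hp.ne')
  refine (d1.sub d3).congr_deriv ?_
  simp only [id]
  field_simp
  nlinarith

lemma GG_lower {u : ℝ} (h0 : 0 ≤ u) (h1 : u < 1) :
    2 * u ^ 3 / 3 + u ^ 5 / 5 + 3 * u ^ 7 / 28 ≤ GG u := by
  have hm : MonotoneOn (fun x : ℝ => GG x - (2 * x ^ 3 / 3 + x ^ 5 / 5 + 3 * x ^ 7 / 28))
      (Set.Ico 0 1) := by
    apply monotoneOn_of_hasDerivWithinAt_nonneg (convex_Ico 0 1)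
      (f' := fun x => 2 * x ^ 2 / Real.sqrt (1 - x ^ 2) - (2 * x ^ 2 + x ^ 4 + 3 * x ^ 6 / 4))
    · exact (GG_cont.sub (by fun_prop)).continuousOn
    · intro x hx
      rw [interior_Ico] at hx
      have d : HasDerivAt (fun x : ℝ => 2 * x ^ 3 / 3 + x ^ 5 / 5 + 3 * x ^ 7 / 28)
          (2 * x ^ 2 + x ^ 4 + 3 * x ^ 6 / 4) x := by
        refine ((((hasDerivAt_pow 3 x).const_mul 2).div_const 3).add
          ((hasDerivAt_pow 5 x).div_const 5) |>.add
          (((hasDerivAt_pow 7 x).const_mul 3).div_const 28)).congr_deriv ?_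
        norm_num; ring
      exact ((GG_deriv (by linarith [hx.1]) hx.2).sub d).hasDerivWithinAt
    · intro x hx
      rw [interior_Ico] at hx
      obtain ⟨hx0, hx1⟩ := hx
      have hp : 0 < 1 - x ^ 2 := by nlinarith
      have hs := Real.sqrt_pos.mpr hp
      have key : Real.sqrt (1 - x ^ 2) * (1 + x ^ 2 / 2 + 3 * x ^ 4 / 8) ≤ 1 := by
        have : Real.sqrt (1 - x ^ 2) ≤ 1 / (1 + x ^ 2 / 2 + 3 * x ^ 4 / 8) := by
          apply Real.sqrt_le_iff.mpr
          refine ⟨by positivity, ?_⟩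
          rw [div_pow, le_div_iff₀ (by positivity)]
          have e : (1 - x ^ 2) * (1 + x ^ 2 / 2 + 3 * x ^ 4 / 8) ^ 2
            = 1 ^ 2 - (5 / 8 * x ^ 6 + 15 / 64 * x ^ 8 + 9 / 64 * x ^ 10) := by ring
          rw [e]
          have : 0 ≤ (5 / 8 * x ^ 6 + 15 / 64 * x ^ 8 + 9 / 64 * x ^ 10) := by positivity
          linarith
        rwa [le_div_iff₀ (by positivity)] at this
      rw [sub_nonneg, le_div_iff₀ hs]
      nlinarith [mul_le_mul_of_nonneg_left key (by positivity : 0 ≤ 2 * x ^ 2)]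
  have := hm (by simp : (0:ℝ) ∈ Set.Ico (0:ℝ) 1) ⟨h0, h1⟩ h0
  simp only [GG_zero] at this
  norm_num at this
  linarith

lemma GG_upper {u : ℝ} (h0 : 0 ≤ u) (h1 : u ≤ 1 / 2) :
    GG u ≤ 2 * u ^ 3 / 3 + u ^ 5 / 5 + 3 * u ^ 7 / 28 + 2 * u ^ 9 / 9 := by
  have hm : MonotoneOn (fun x : ℝ => (2 * x ^ 3 / 3 + x ^ 5 / 5 + 3 * x ^ 7 / 28 + 2 * x ^ 9 / 9)
      - GG x) (Set.Icc 0 (1 / 2)) := by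
    apply monotoneOn_of_hasDerivWithinAt_nonneg (convex_Icc 0 (1 / 2))
      (f' := fun x => (2 * x ^ 2 + x ^ 4 + 3 * x ^ 6 / 4 + 2 * x ^ 8)
        - 2 * x ^ 2 / Real.sqrt (1 - x ^ 2))
    · exact (Continuous.sub (by fun_prop) GG_cont).continuousOn
    · intro x hx
      rw [interior_Icc] at hx
      have d : HasDerivAt (fun x : ℝ => 2 * x ^ 3 / 3 + x ^ 5 / 5 + 3 * x ^ 7 / 28 + 2 * x ^ 9 / 9)
          (2 * x ^ 2 + x ^ 4 + 3 * x ^ 6 / 4 + 2 * x ^ 8) x := by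
        refine ((((hasDerivAt_pow 3 x).const_mul 2).div_const 3).add
          ((hasDerivAt_pow 5 x).div_const 5) |>.add
          (((hasDerivAt_pow 7 x).const_mul 3).div_const 28) |>.add
          (((hasDerivAt_pow 9 x).const_mul 2).div_const 9)).congr_deriv ?_
        norm_num; ring
      exact (d.sub (GG_deriv (by linarith [hx.1]) (by linarith [hx.2]))).hasDerivWithinAt
    · intro x hx
      rw [interior_Icc] at hx
      obtain ⟨hx0, hx1⟩ := hx
      have hx2 : x ^ 2 ≤ 1 / 4 := by nlinarith
      have hp : 0 < 1 - x ^ 2 := by nlinarith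
      have hs := Real.sqrt_pos.mpr hp
      have key : 1 ≤ Real.sqrt (1 - x ^ 2) * (1 + x ^ 2 / 2 + 3 * x ^ 4 / 8 + x ^ 6) := by
        have : 1 / (1 + x ^ 2 / 2 + 3 * x ^ 4 / 8 + x ^ 6) ≤ Real.sqrt (1 - x ^ 2) := by
          apply Real.le_sqrt_of_sq_le
          rw [div_pow, div_le_iff₀ (by positivity)]
          have e : (1 - x ^ 2) * (1 + x ^ 2 / 2 + 3 * x ^ 4 / 8 + x ^ 6) ^ 2
            = 1 ^ 2 + x ^ 6 * (11 / 8 - 79 / 64 * x ^ 2 - 25 / 64 * x ^ 4 + x ^ 6 / 4 - x ^ 8) := by ring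
          rw [e]
          have h4 : x ^ 4 ≤ 1 / 16 := by nlinarith
          have h8 : x ^ 8 ≤ 1 / 16 := by nlinarith [pow_nonneg hx0.le 4]
          have h6 : 0 ≤ x ^ 6 := by positivity
          have : 0 ≤ (11 / 8 - 79 / 64 * x ^ 2 - 25 / 64 * x ^ 4 + x ^ 6 / 4 - x ^ 8) := by
            linarith
          nlinarith [mul_nonneg h6 this]
        rwa [div_le_iff₀ (by positivity)] at this
      rw [sub_nonneg, div_le_iff₀ hs]
      nlinarith [mul_le_mul_of_nonneg_left key (by positivity : 0 ≤ 2 * x ^ 2)]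
  have := hm (by norm_num : (0:ℝ) ∈ Set.Icc (0:ℝ) (1 / 2)) ⟨h0, h1⟩ h0
  simp only [GG_zero] at this
  norm_num at this
  linarith

set_option maxHeartbeats 2000000 in
/-- algebraic core -/
lemma core {u y : ℝ} (hu : 0 < u) (hu2 : u ≤ 1 / 2) (hy : 0 < y)
    (h1 : u ^ 3 + 3 / 10 * u ^ 5 + 9 / 56 * u ^ 7 ≤ y ^ 3)
    (h2 : y ^ 3 ≤ u ^ 3 + 3 / 10 * u ^ 5 + 9 / 56 * u ^ 7 + 1 / 3 * u ^ 9) :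
    |u ^ 3 - y ^ 3 * (1 - 3 / 10 * y ^ 2 - 3 / 280 * y ^ 4)| ≤ 10 * (y ^ 3) ^ 3 := by
  obtain ⟨q, rfl⟩ : ∃ q, y = u * q := ⟨y / u, by field_simp⟩
  have hq : 0 < q := by
    by_contra hc
    nlinarith
  obtain ⟨a, ha⟩ : ∃ a, a = u ^ 2 := ⟨_, rfl⟩
  have ha0 : 0 < a := by rw [ha]; positivity
  have ha1 : a ≤ 1 / 4 := by rw [ha]; nlinarith
  have hu3 : 0 < u ^ 3 := by positivity
  have h1' : 1 + 3 / 10 * a + 9 / 56 * a ^ 2 ≤ q ^ 3 := by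
    refine le_of_mul_le_mul_left ?_ hu3
    rw [ha]; nlinarith
  have h2' : q ^ 3 ≤ 1 + 3 / 10 * a + 9 / 56 * a ^ 2 + 1 / 3 * a ^ 3 := by
    refine le_of_mul_le_mul_left ?_ hu3
    rw [ha]; nlinarith
  obtain ⟨r, hr⟩ : ∃ r, q ^ 3 = 1 + 3 / 10 * a + 9 / 56 * a ^ 2 + r * a ^ 3 :=
    ⟨(q ^ 3 - (1 + 3 / 10 * a + 9 / 56 * a ^ 2)) / a ^ 3, by field_simp; ring⟩
  have ha3 : 0 < a ^ 3 := by positivity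
  have hr0 : 0 ≤ r := by
    by_contra hc
    nlinarith [mul_pos (neg_pos.mpr (not_le.mp hc)) ha3]
  have hr1 : r ≤ 1 / 3 := by
    by_contra hc
    nlinarith [mul_pos (sub_pos.mpr (not_le.mp hc)) ha3]
  have hq1 : 1 ≤ q := by
    by_contra hc
    have : q ^ 3 < 1 := pow_lt_one₀ hq.le (not_le.mp hc) (by norm_num)
    nlinarith [sq_nonneg a]
  have hlow : 1 + a / 5 ≤ q ^ 2 := by
    refine le_of_pow_le_pow_left₀ (n := 3) (by norm_num) (by positivity) ?_
    have e : (q ^ 2) ^ 3 = (q ^ 3) ^ 2 := by ring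
    rw [e]
    have : (1 + 3 / 10 * a + 9 / 56 * a ^ 2) ^ 2 ≤ (q ^ 3) ^ 2 :=
      pow_le_pow_left₀ (by positivity) h1' 2
    refine le_trans ?_ this
    have : 0 ≤ a ^ 2 * (1 / 4 - a) := by
      apply mul_nonneg (by positivity); linarith
    nlinarith [pow_pos ha0 4, pow_pos ha0 2]
  have hup : q ^ 2 ≤ 1 + a / 5 + a ^ 2 := by
    refine le_of_pow_le_pow_left₀ (n := 3) (by norm_num) (by positivity) ?_
    have e : (q ^ 2) ^ 3 = (q ^ 3) ^ 2 := by ring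
    rw [e]
    have h3 : q ^ 3 ≤ 1 + 3 / 10 * a + 1 / 2 * a ^ 2 := by
      nlinarith [mul_nonneg (sq_nonneg a) (sub_nonneg.mpr ha1)]
    have : (q ^ 3) ^ 2 ≤ (1 + 3 / 10 * a + 1 / 2 * a ^ 2) ^ 2 :=
      pow_le_pow_left₀ (by positivity) h3 2
    refine this.trans ?_
    rw [← sub_nonneg]
    have e : (1 + a / 5 + a ^ 2) ^ 3 - (1 + 3 / 10 * a + 1 / 2 * a ^ 2) ^ 2 =
      a ^ 2 * (2 + 3/100 + 227/250 * a + (287 / 100) * a ^ 2 + 3 / 5 * a ^ 3 + a ^ 4) := by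
      ring
    rw [e]; positivity
  obtain ⟨e, he⟩ : ∃ e, q ^ 2 = 1 + a / 5 + e * a ^ 2 :=
    ⟨(q ^ 2 - (1 + a / 5)) / a ^ 2, by field_simp; ring⟩
  have ha2 : 0 < a ^ 2 := by positivity
  have he0 : 0 ≤ e := by
    by_contra hc
    nlinarith [mul_pos (neg_pos.mpr (not_le.mp hc)) ha2]
  have he1 : e ≤ 1 := by
    by_contra hc
    nlinarith [mul_pos (sub_pos.mpr (not_le.mp hc)) ha2]
  -- X = q^2 expansions
  obtain ⟨P1, hP1⟩ : ∃ P1, P1 = 3 / 10 + 9 / 56 * a + r * a ^ 2 := ⟨_, rfl⟩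
  obtain ⟨B, hB⟩ : ∃ B, B = 3 / 10 * e + 3 / 280 * (1/5 + e * a) * (2 + a/5 + e * a^2) := ⟨_, rfl⟩
  have ha21 : a ^ 2 ≤ 1 := pow_le_one₀ ha0.le (by linarith)
  have hea : 0 ≤ e * a ∧ e * a ≤ 1 := ⟨by positivity, mul_le_one₀ he1 ha0.le (by linarith)⟩
  have hea2 : 0 ≤ e * a ^ 2 ∧ e * a ^ 2 ≤ 1 := ⟨by positivity, mul_le_one₀ he1 ha2.le ha21⟩
  have hra : 0 ≤ r * a ∧ r * a ≤ 1 :=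
    ⟨by positivity, mul_le_one₀ (by linarith) ha0.le (by linarith)⟩
  have hra2 : 0 ≤ r * a ^ 2 ∧ r * a ^ 2 ≤ 1 :=
    ⟨by positivity, mul_le_one₀ (by linarith) ha2.le ha21⟩
  have hB0 : 0 ≤ B := by rw [hB]; positivity
  have hB1 : B ≤ 1 := by
    have : (1/5 + e * a) * (2 + a/5 + e * a^2) ≤ 2 * 4 := by
      apply mul_le_mul <;> linarith
    rw [hB]; linarith
  have hQ : 1 - 3 / 10 * (a * q ^ 2) - 3 / 280 * (a * q ^ 2) ^ 2
      = 1 - 3 / 10 * a - (3 / 50 + 3 / 280) * a ^ 2 - B * a ^ 3 := by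
    rw [he, hB]; ring
  obtain ⟨R, hR⟩ : ∃ R, R = r - B - 9/56 * (3/10) - 3/10 * (99/1400)
      - (9/56 * (99/1400)) * a - (r * a) * (3/10) - (r * a ^ 2) * (99/1400) - P1 * a * B := ⟨_, rfl⟩
  have hmain : q ^ 3 * (1 - 3 / 10 * (a * q ^ 2) - 3 / 280 * (a * q ^ 2) ^ 2) = 1 + R * a ^ 3 := by
    rw [hQ, hr, hR, hP1]; ring
  have hP10 : 0 ≤ P1 := by rw [hP1]; positivity
  have hP1u : P1 ≤ 2 := by rw [hP1]; linarith
  have hPa : 0 ≤ P1 * a * B ∧ P1 * a * B ≤ 2 := by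
    refine ⟨by positivity, ?_⟩
    have h3 : P1 * a ≤ 2 * 1 := mul_le_mul hP1u (by linarith) ha0.le (by norm_num)
    have h4 : P1 * a * B ≤ (2 * 1) * 1 := mul_le_mul h3 hB1 hB0 (by norm_num)
    linarith
  have hRb : |R| ≤ 10 := by
    rw [abs_le, hR]
    constructor <;> linarith [hPa.1, hPa.2, hra.1, hra.2, hra2.1, hra2.2]
  have ee : u ^ 3 - (u * q) ^ 3 * (1 - 3 / 10 * (u * q) ^ 2 - 3 / 280 * (u * q) ^ 4)
      = - (R * u ^ 9) := by
    have : (u * q) ^ 3 * (1 - 3 / 10 * (u * q) ^ 2 - 3 / 280 * (u * q) ^ 4)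
       = u ^ 3 * (q ^ 3 * (1 - 3 / 10 * (a * q ^ 2) - 3 / 280 * (a * q ^ 2) ^ 2)) := by
      rw [ha]; ring
    rw [this, hmain, ha]; ring
  rw [ee, abs_neg, abs_mul, abs_of_pos (by positivity : 0 < u ^ 9)]
  have : u ^ 9 ≤ ((u * q) ^ 3) ^ 3 := by
    have e : ((u * q) ^ 3) ^ 3 = u ^ 9 * q ^ 9 := by ring
    rw [e]
    exact le_mul_of_one_le_right (by positivity) (one_le_pow₀ hq1)
  exact mul_le_mul hRb this (by positivity) (by norm_num)

lemma implicit_sol (h : ℝ → ℝ)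
    (hmem : ∀ s ∈ Set.Ioo (0:ℝ) (π ^ 2), h s ∈ Set.Ioo (0:ℝ) ((4 * π) ^ (3/2 : ℝ)))
    (hode : ∀ s ∈ Set.Ioo (0:ℝ) (π ^ 2),
      HasDerivAt h (-Real.sqrt (36 * π - 9 * (h s) ^ (2/3 : ℝ))) s)
    (hlim : Filter.Tendsto h (nhdsWithin 0 (Set.Ioo (0:ℝ) (π ^ 2)))
      (nhds ((4 * π) ^ (3/2 : ℝ)))) :
    ∀ s ∈ Set.Ioo (0:ℝ) (π ^ 2), ∃ u, 0 < u ∧ u < 1 ∧ h s = (2 * √π) ^ 3 * u ^ 3 ∧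
      GG u = (π ^ 2 - s) / (2 * π) := by
  have hπ := Real.pi_pos
  have hk : 0 < √π := Real.sqrt_pos.mpr hπ
  have hk2 : √π ^ 2 = π := Real.sq_sqrt hπ.le
  have h32 : (4 * π) ^ (3/2 : ℝ) = (2 * √π) ^ 3 := by
    have : 4 * π = (2 * √π) ^ (2:ℝ) := by
      rw [Real.rpow_two, mul_pow, hk2]; norm_num
    rw [this, ← Real.rpow_mul (by positivity), ← Real.rpow_natCast]
    norm_num
  rw [h32] at hlim
  rw [h32] at hmem
  set u : ℝ → ℝ := fun s => (h s) ^ (1/3 : ℝ) / (2 * √π) with hu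
  have hcube : ∀ s ∈ Set.Ioo (0:ℝ) (π ^ 2), h s = (2 * √π) ^ 3 * u s ^ 3 := by
    intro s hs
    have := (hmem s hs).1
    have e : ((h s) ^ (1/3 : ℝ)) ^ 3 = h s := by
      rw [← Real.rpow_natCast, ← Real.rpow_mul this.le]; norm_num
    simp only [hu]
    rw [div_pow, e]; field_simp
  have hu0 : ∀ s ∈ Set.Ioo (0:ℝ) (π ^ 2), 0 < u s := by
    intro s hs
    have := (hmem s hs).1
    simp only [hu]; positivity
  have hu1 : ∀ s ∈ Set.Ioo (0:ℝ) (π ^ 2), u s < 1 := by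
    intro s hs
    by_contra hc
    have h1 : 1 ≤ u s ^ 3 := one_le_pow₀ (not_lt.mp hc)
    have := (hmem s hs).2
    rw [hcube s hs] at this
    have hp : 0 < (2 * √π) ^ 3 := by positivity
    nlinarith
  have hder : ∀ s ∈ Set.Ioo (0:ℝ) (π ^ 2),
      HasDerivAt (fun s => GG (u s) + s / (2 * π)) 0 s := by
    intro s hs
    have hp := (hmem s hs).1
    have hu0' := hu0 s hs
    have hu1' := hu1 s hs
    have hq : 0 < 1 - u s ^ 2 := by nlinarith
    have hsq := Real.sqrt_pos.mpr hq
    have e13 : (h s) ^ (1/3 : ℝ) = 2 * √π * u s := by simp only [hu]; field_simp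
    have e23 : (h s) ^ (2/3 : ℝ) = 4 * π * u s ^ 2 := by
      have : (h s) ^ (2/3 : ℝ) = ((h s) ^ (1/3 : ℝ)) ^ 2 := by
        rw [← Real.rpow_natCast, ← Real.rpow_mul hp.le]; norm_num
      rw [this, e13]; linear_combination 4 * u s ^ 2 * hk2
    have em : (h s) ^ ((1/3 : ℝ) - 1) = (4 * π * u s ^ 2)⁻¹ := by
      rw [← e23, ← Real.rpow_neg hp.le]; norm_num
    have er : √(36 * π - 9 * (h s) ^ (2/3 : ℝ)) = 6 * √π * √(1 - u s ^ 2) := by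
      rw [e23]
      have : 36 * π - 9 * (4 * π * u s ^ 2) = (6 * √π) ^ 2 * (1 - u s ^ 2) := by
        linear_combination (-36 * (1 - u s ^ 2)) * hk2
      rw [this, Real.sqrt_mul (by positivity), Real.sqrt_sq (by positivity)]
    have d0 := hode s hs
    rw [er] at d0
    have d1 := (d0.rpow_const (p := (1/3 : ℝ)) (Or.inl hp.ne')).div_const (2 * √π)
    rw [em] at d1
    have d2 := (GG_deriv (by linarith) hu1').comp s d1
    have d3 := d2.add ((hasDerivAt_id s).div_const (2 * π))
    refine d3.congr_deriv ?_
    have hk' := hk.ne'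
    have hs' := hsq.ne'
    field_simp
    ring
  have hconst : ∃ c, ∀ s ∈ Set.Ioo (0:ℝ) (π ^ 2), GG (u s) + s / (2 * π) = c := by
    refine isOpen_Ioo.exists_is_const_of_deriv_eq_zero isPreconnected_Ioo ?_ ?_
    · intro s hs
      exact (hder s hs).differentiableAt.differentiableWithinAt
    · intro s hs
      exact (hder s hs).deriv
  obtain ⟨c, hc⟩ := hconst
  have hne : (nhdsWithin (0:ℝ) (Set.Ioo (0:ℝ) (π ^ 2))).NeBot := by
    rw [nhdsWithin_Ioo_eq_nhdsGT (by positivity)]; infer_instance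
  have hlu : Tendsto u (nhdsWithin 0 (Set.Ioo (0:ℝ) (π ^ 2))) (nhds 1) := by
    have := (hlim.rpow_const (p := (1/3 : ℝ)) (Or.inr (by norm_num))).div_const (2 * √π)
    have e : ((2 * √π) ^ 3 : ℝ) ^ (1/3 : ℝ) / (2 * √π) = 1 := by
      rw [← Real.rpow_natCast, ← Real.rpow_mul (by positivity)]
      have h1 : (((3:ℕ):ℝ) * (1/3 : ℝ)) = 1 := by norm_num
      rw [h1, Real.rpow_one, div_self (by positivity)]
    rwa [e] at this
  have hl2 : Tendsto (fun s => GG (u s) + s / (2 * π)) (nhdsWithin 0 (Set.Ioo (0:ℝ) (π ^ 2)))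
      (nhds (GG 1 + 0 / (2 * π))) := by
    apply ((GG_cont.tendsto 1).comp hlu).add
    exact (tendsto_id.mono_left nhdsWithin_le_nhds).div_const _
  have hl3 : Tendsto (fun s => GG (u s) + s / (2 * π)) (nhdsWithin 0 (Set.Ioo (0:ℝ) (π ^ 2)))
      (nhds c) := by
    refine tendsto_const_nhds.congr' ?_
    filter_upwards [self_mem_nhdsWithin] with s hs
    exact (hc s hs).symm
  have hcv := tendsto_nhds_unique hl3 hl2
  rw [GG_one] at hcv
  intro s hs
  refine ⟨u s, hu0 s hs, hu1 s hs, hcube s hs, ?_⟩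
  have := hc s hs
  rw [hcv] at this
  field_simp at this ⊢
  linarith

/-- Asymptotic expansion near `s = π²` of the solution of
`h' = −(36π − 9h^{2/3})^{1/2}` on `(0, π²)` with `h → (4π)^{3/2}` as `s → 0⁺`:
`h(π² − s) = 6√π s (1 − (3/10)(3s/(4π))^{2/3} − (3/280)(3s/(4π))^{4/3}) + O(s³)`. -/
theorem stmt_12 (h : ℝ → ℝ)
    (hmem : ∀ s ∈ Set.Ioo (0:ℝ) (π ^ 2), h s ∈ Set.Ioo (0:ℝ) ((4 * π) ^ (3/2 : ℝ)))
    (hode : ∀ s ∈ Set.Ioo (0:ℝ) (π ^ 2),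
      HasDerivAt h (-Real.sqrt (36 * π - 9 * (h s) ^ (2/3 : ℝ))) s)
    (hlim : Filter.Tendsto h (nhdsWithin 0 (Set.Ioo (0:ℝ) (π ^ 2)))
      (nhds ((4 * π) ^ (3/2 : ℝ)))) :
    ∃ C > (0:ℝ), ∃ s₁ ∈ Set.Ioo (0:ℝ) (π ^ 2), ∀ s ∈ Set.Ioo (0:ℝ) s₁,
      |h (π ^ 2 - s) - 6 * Real.sqrt π * s *
          (1 - (3/10) * (3 * s / (4 * π)) ^ (2/3 : ℝ)
             - (3/280) * (3 * s / (4 * π)) ^ (4/3 : ℝ))|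
        ≤ C * s ^ 3 := by
  have hπ := Real.pi_pos
  have hπ3 := Real.pi_gt_three
  have hk : 0 < √π := Real.sqrt_pos.mpr hπ
  have hk2 : √π ^ 2 = π := Real.sq_sqrt hπ.le
  refine ⟨(2 * √π) ^ 3 * (10 * (3 / (4 * π)) ^ 3), by positivity, π / 6,
    ⟨by positivity, by nlinarith⟩, ?_⟩
  intro s hs
  obtain ⟨hs0, hs1⟩ := hs
  obtain ⟨u, hu0, hu1, hh, hG⟩ := implicit_sol h hmem hode hlim (π ^ 2 - s)
    ⟨by nlinarith, by linarith⟩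
  have hG' : GG u = s / (2 * π) := by rw [hG]; ring
  have hx : 0 < 3 * s / (4 * π) := by positivity
  obtain ⟨x, hxd⟩ : ∃ x, x = 3 * s / (4 * π) := ⟨_, rfl⟩
  rw [← hxd] at hx ⊢
  have hGx : GG u = 2 / 3 * x := by rw [hG', hxd]; field_simp; norm_num
  have hx8 : x ≤ 1 / 8 := by
    rw [hxd, div_le_iff₀ (by positivity)]; linarith
  have hl := GG_lower hu0.le hu1
  rw [hGx] at hl
  have hu2 : u ≤ 1 / 2 := by
    refine le_of_pow_le_pow_left₀ (n := 3) (by norm_num) (by norm_num) ?_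
    have := pow_pos hu0 5
    have := pow_pos hu0 7
    linarith
  have hup := GG_upper hu0.le hu2
  rw [hGx] at hup
  have hy : 0 < x ^ (1/3 : ℝ) := by positivity
  have y3 : (x ^ (1/3 : ℝ)) ^ 3 = x := by
    rw [← Real.rpow_natCast, ← Real.rpow_mul hx.le]; norm_num
  have y2 : x ^ (2/3 : ℝ) = (x ^ (1/3 : ℝ)) ^ 2 := by
    rw [← Real.rpow_natCast, ← Real.rpow_mul hx.le]; norm_num
  have y4 : x ^ (4/3 : ℝ) = (x ^ (1/3 : ℝ)) ^ 4 := by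
    rw [← Real.rpow_natCast, ← Real.rpow_mul hx.le]; norm_num
  have hc := core hu0 hu2 hy (by rw [y3]; linarith) (by rw [y3]; linarith)
  rw [← y2, ← y4, y3] at hc
  have hsx : 6 * √π * s = (2 * √π) ^ 3 * x := by
    have : (2 * √π) ^ 3 = 8 * π * √π := by linear_combination 8 * √π * hk2
    rw [this, hxd]; field_simp; norm_num
  have e : h (π ^ 2 - s) - 6 * √π * s * (1 - (3/10) * x ^ (2/3 : ℝ) - (3/280) * x ^ (4/3 : ℝ))
      = (2 * √π) ^ 3 * (u ^ 3 - x * (1 - 3 / 10 * x ^ (2/3 : ℝ) - 3 / 280 * x ^ (4/3 : ℝ))) := by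
    rw [hsx, hh]; ring
  rw [e, abs_mul, abs_of_pos (by positivity : 0 < (2 * √π) ^ 3)]
  have e2 : (2 * √π) ^ 3 * (10 * (3 / (4 * π)) ^ 3) * s ^ 3 = (2 * √π) ^ 3 * (10 * x ^ 3) := by
    rw [hxd]; ring
  rw [e2]
  exact mul_le_mul_of_nonneg_left hc (by positivity)
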